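/- For every x ∈ ℝ, lim_{t→b−} E[ Γ(t, x + z√(t−a)) · V(t, x, x + z√(t−a)) ] = Δ(x)/2 and lim_{t→b−} E[ (∂_x A(t, x + z√(t−a)))² · Γ(t, x + z√(t−a)) · V(t, x, x + z√(t−a)) ] = Δ(x)/6, where Γ(t,x) = (2π(b−t))^{−1/2} e^{−x²/(2(b−t))} / E[ e^{m'|x + z√(b−t)|} ] and Δ(x) = (2/√(2π(b−a))) · e^{−x²/(2(b−a))} / E[ e^{m|x + z√(b−a)|} ]. -/

import Mathlib

/-!
With `y = x + z √(t - a)`, the weight `Gam * V` equals `φ_s(y) * K(y) / N`, where `s = √(b - t)`,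
`φ_s` is the density of `N(0, s²)`, `N = E[exp(m A(t, x + z √(t - a)))]`, and
`K = exp(m A) / E[exp(m' |y + z s|)]` lies in `(0, 1]` because `m < m'`. Substituting `y = s w`
makes `w` standard Gaussian and leaves the density of `N(x, t - a)` at `s w` as a bounded weight
(`integral_rescale`). As `t → b⁻`, `K(s w) → 1`, `N → E[exp(m |x + z √(b - a)|)]`, and the density
tends to its value at `0`, so dominated convergence gives `Δ(x) / 2` (`tendsto_weighted`).

In the second limit the extra factor is `∂ₓA(t, s w)²`, bounded by `1`. Differentiating under the
integral gives `∂ₓA = E[sgn(y + z s) exp(m' |y + z s|)] / E[exp(m' |y + z s|)]`, which at `y = s w`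
tends to `S w = E[sgn(w + z)] = 2Φ(w) - 1`. As `Φ(w)` is uniform, `E[S²] = 1/3`
(`integral_S_sq`), hence `Δ(x) / 6`.
-/

open MeasureTheory ProbabilityTheory

/-- `A(t,x) = (1/m') log E[exp(m'|x + z√(b-t)|)]` for a standard Gaussian `z`. -/
noncomputable def A (b m' t x : ℝ) : ℝ :=
  (1 / m') * Real.log (∫ z, Real.exp (m' * |x + z * Real.sqrt (b - t)|) ∂(gaussianReal 0 1))

/-- `B(t,x) = (1/m) log E[exp(m A(t, x + z√(t-a)))]` for a standard Gaussian `z`. -/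
noncomputable def B (a b m m' t x : ℝ) : ℝ :=
  (1 / m) * Real.log
    (∫ z, Real.exp (m * A b m' t (x + z * Real.sqrt (t - a))) ∂(gaussianReal 0 1))

/-- `V(t,x,y) = exp(m (A(t,y) - B(t,x)))`. -/
noncomputable def V (a b m m' t x y : ℝ) : ℝ :=
  Real.exp (m * (A b m' t y - B a b m m' t x))

/-- `Γ(t,x) = (2π(b-t))^{-1/2} e^{-x²/(2(b-t))} / E[e^{m'|x+z√(b-t)|}]`. -/
noncomputable def Gam (b m' t x : ℝ) : ℝ :=
  (Real.sqrt (2 * Real.pi * (b - t)))⁻¹ * Real.exp (-x ^ 2 / (2 * (b - t)))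
    / ∫ z, Real.exp (m' * |x + z * Real.sqrt (b - t)|) ∂(gaussianReal 0 1)

/-- `Δ(x) = (2/√(2π(b-a))) e^{-x²/(2(b-a))} / E[e^{m|x+z√(b-a)|}]`. -/
noncomputable def Del (a b m x : ℝ) : ℝ :=
  2 / Real.sqrt (2 * Real.pi * (b - a)) * Real.exp (-x ^ 2 / (2 * (b - a)))
    / ∫ z, Real.exp (m * |x + z * Real.sqrt (b - a)|) ∂(gaussianReal 0 1)

open Filter Topology Set

/-! ### The expectation `G` and its derivative -/

/-- The standard Gaussian law on `ℝ`. -/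
local notation "γ" => gaussianReal 0 1

/-- `G c y s = E[exp(c |y + z s|)]` for a standard Gaussian `z`, the expectation occurring in
`A`, `Gam` and `Del`. -/
noncomputable def G (c y s : ℝ) : ℝ := ∫ z, Real.exp (c * |y + z * s|) ∂γ

/-- The real-valued sign, with value `0` at `0`. -/
noncomputable def sgn (u : ℝ) : ℝ := (SignType.sign u : ℝ)

lemma sgn_eq (u : ℝ) : sgn u = if 0 < u then 1 else if u < 0 then -1 else 0 := by
  unfold sgn
  rw [sign_apply]
  split_ifs <;> simp

lemma measurable_sgn : Measurable sgn := by
  have : sgn = fun u => if 0 < u then (1 : ℝ) else if u < 0 then -1 else 0 := funext sgn_eq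
  rw [this]
  exact Measurable.ite measurableSet_Ioi measurable_const
    (Measurable.ite measurableSet_Iio measurable_const measurable_const)

lemma abs_sgn_le (u : ℝ) : |sgn u| ≤ 1 := by
  rw [sgn_eq]; split_ifs <;> simp

lemma sgn_mul_pos {s : ℝ} (hs : 0 < s) (u : ℝ) : sgn (s * u) = sgn u := by
  simp [sgn, sign_mul, sign_pos hs]

lemma integrable_exp_abs (k c : ℝ) : Integrable (fun z : ℝ => Real.exp (k + c * |z|)) γ := by
  simp_rw [Real.exp_add]
  exact (integrable_exp_mul_abs (X := fun z : ℝ => z) (integrable_exp_mul_gaussianReal c)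
    (integrable_exp_mul_gaussianReal (-c))).const_mul _

lemma exp_abs_le {c : ℝ} (hc : 0 < c) {y s Y S : ℝ} (hy : |y| ≤ Y) (hs : |s| ≤ S) (z : ℝ) :
    Real.exp (c * |y + z * s|) ≤ Real.exp (c * Y + (c * S) * |z|) := by
  apply Real.exp_le_exp.2
  have h1 : |y + z * s| ≤ |y| + |z| * |s| := by
    simpa [abs_mul] using abs_add_le y (z * s)
  have h2 : |z| * |s| ≤ |z| * S := by gcongr
  nlinarith

lemma integrable_G {c : ℝ} (hc : 0 < c) (y s : ℝ) :
    Integrable (fun z => Real.exp (c * |y + z * s|)) γ := by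
  refine (integrable_exp_abs (c * |y|) (c * |s|)).mono' (by fun_prop) (ae_of_all _ fun z => ?_)
  rw [Real.norm_eq_abs, Real.abs_exp]
  exact exp_abs_le hc le_rfl le_rfl z

lemma one_le_G {c : ℝ} (hc : 0 < c) (y s : ℝ) : 1 ≤ G c y s := by
  have : ∫ _z, (1 : ℝ) ∂γ ≤ G c y s :=
    integral_mono (integrable_const _) (integrable_G hc y s)
      fun z => Real.one_le_exp (by positivity)
  simpa using this

lemma G_zero {c : ℝ} : G c 0 0 = 1 := by simp [G]

lemma G_at_zero {c : ℝ} (y : ℝ) : G c y 0 = Real.exp (c * |y|) := by simp [G]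

lemma G_le {c : ℝ} (hc : 0 < c) (y s : ℝ) : G c y s ≤ Real.exp (c * |y|) * G c 0 s := by
  unfold G
  rw [← integral_const_mul]
  refine integral_mono (integrable_G hc y s) ((integrable_G hc 0 s).const_mul _) fun z => ?_
  rw [← Real.exp_add]
  apply Real.exp_le_exp.2
  have := abs_add_le y (z * s)
  rw [zero_add]
  nlinarith

lemma continuous_G {c : ℝ} (hc : 0 < c) : Continuous (fun p : ℝ × ℝ => G c p.1 p.2) := by
  rw [continuous_iff_continuousAt]
  intro p
  refine continuousAt_of_dominated
    (bound := fun z => Real.exp (c * (|p.1| + 1) + (c * (|p.2| + 1)) * |z|))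
    (Eventually.of_forall fun q => by fun_prop) ?_ (integrable_exp_abs _ _)
    (ae_of_all _ fun z => by fun_prop)
  have h1 : ∀ᶠ q : ℝ × ℝ in 𝓝 p, |q.1| < |p.1| + 1 :=
    (continuous_fst.abs.tendsto p).eventually_lt_const (by simp)
  have h2 : ∀ᶠ q : ℝ × ℝ in 𝓝 p, |q.2| < |p.2| + 1 :=
    (continuous_snd.abs.tendsto p).eventually_lt_const (by simp)
  filter_upwards [h1, h2] with q h1 h2
  refine ae_of_all _ fun z => ?_
  rw [Real.norm_eq_abs, Real.abs_exp]
  exact exp_abs_le hc h1.le h2.le z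

/-- `DG c y s = E[sgn(y + z s) exp(c |y + z s|)]`, which is `1 / c` times the `y`-derivative
of `G c y s` when `s ≠ 0`. -/
noncomputable def DG (c y s : ℝ) : ℝ := ∫ z, sgn (y + z * s) * Real.exp (c * |y + z * s|) ∂γ

lemma abs_DG_le {c : ℝ} (hc : 0 < c) (y s : ℝ) : |DG c y s| ≤ G c y s := by
  refine (abs_integral_le_integral_abs).trans ?_
  have hb : ∀ z, |sgn (y + z * s) * Real.exp (c * |y + z * s|)| ≤ Real.exp (c * |y + z * s|) := by
    intro z
    rw [abs_mul, Real.abs_exp]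
    exact mul_le_of_le_one_left (Real.exp_pos _).le (abs_sgn_le _)
  refine integral_mono_of_nonneg (ae_of_all _ fun z => abs_nonneg _) (integrable_G hc y s)
    (ae_of_all _ hb)

lemma abs_exp_sub_exp_le {u v M : ℝ} (hu : u ≤ M) (hv : v ≤ M) :
    |Real.exp u - Real.exp v| ≤ Real.exp M * |u - v| := by
  wlog h : v ≤ u generalizing u v
  · rw [abs_sub_comm, abs_sub_comm u v]
    exact this hv hu (le_of_not_ge h)
  rw [abs_of_nonneg (sub_nonneg.2 (Real.exp_le_exp.2 h)), abs_of_nonneg (sub_nonneg.2 h)]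
  have h1 : Real.exp v = Real.exp u * Real.exp (v - u) := by rw [← Real.exp_add]; ring_nf
  have h2 := Real.add_one_le_exp (v - u)
  have h3 := Real.exp_le_exp.2 hu
  have h4 := Real.exp_pos u
  calc Real.exp u - Real.exp v = Real.exp u * (1 - Real.exp (v - u)) := by rw [h1]; ring
    _ ≤ Real.exp u * (u - v) := mul_le_mul_of_nonneg_left (by linarith) h4.le
    _ ≤ _ := mul_le_mul_of_nonneg_right h3 (by linarith)

lemma hasDerivAt_G {c : ℝ} (hc : 0 < c) {s : ℝ} (hs : 0 < s) (y : ℝ) :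
    HasDerivAt (fun y => G c y s) (c * DG c y s) y := by
  have key := hasDerivAt_integral_of_dominated_loc_of_lip (μ := γ) (𝕜 := ℝ)
    (F := fun y z => Real.exp (c * |y + z * s|)) (x₀ := y) (s := Metric.ball y 1)
    (F' := fun z => c * (sgn (y + z * s) * Real.exp (c * |y + z * s|)))
    (bound := fun z => c * Real.exp (c * (|y| + 1) + (c * |s|) * |z|))
    (Metric.ball_mem_nhds y one_pos)
    (Eventually.of_forall fun q => by fun_prop) (integrable_G hc y s)
    (by
      have := measurable_sgn
      fun_prop)
    ?_ ((integrable_exp_abs _ _).const_mul _) ?_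
  · have := key.2
    rw [integral_const_mul] at this
    exact this
  · refine ae_of_all _ fun z => ?_
    refine LipschitzOnWith.of_dist_le_mul fun u hu v hv => ?_
    have hin : ∀ w ∈ Metric.ball y 1,
        c * |w + z * s| ≤ c * (|y| + 1) + (c * |s|) * |z| := by
      intro w hw
      rw [Metric.mem_ball, Real.dist_eq] at hw
      have hw' : |w| ≤ |y| + 1 := by
        have := abs_sub_abs_le_abs_sub w y
        linarith
      exact Real.exp_le_exp.1 (exp_abs_le hc hw' le_rfl z)
    rw [Real.dist_eq, Real.dist_eq, Real.coe_nnabs,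
      abs_of_nonneg (show 0 ≤ c * Real.exp (c * (|y| + 1) + (c * |s|) * |z|) by positivity)]
    refine (abs_exp_sub_exp_le (hin u hu) (hin v hv)).trans ?_
    have h1 : abs (c * |u + z * s| - c * |v + z * s|) ≤ c * |u - v| := by
      have h := abs_abs_sub_abs_le_abs_sub (u + z * s) (v + z * s)
      rw [add_sub_add_right_eq_sub] at h
      rw [← mul_sub, abs_mul, abs_of_pos hc]
      exact mul_le_mul_of_nonneg_left h hc.le
    calc _ ≤ Real.exp (c * (|y| + 1) + (c * |s|) * |z|) * (c * |u - v|) := by gcongr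
      _ = _ := by ring
  · -- The integrand fails to be differentiable at `y` only for `z = -y / s`, a null set.
    have : NullSingletonClass (gaussianReal 0 1) := nullSingletonClass_gaussianReal one_ne_zero
    have hne : ∀ᵐ z ∂γ, z ≠ -y / s := by
      simp [ae_iff]
    filter_upwards [hne] with z hz
    have h0 : y + z * s ≠ 0 := by
      intro h
      apply hz
      field_simp
      linarith
    have h1 : HasDerivAt (fun y => |y + z * s|) (sgn (y + z * s)) y := by
      exact ((hasDerivAt_abs h0).comp y ((hasDerivAt_id y).add_const (z * s))).congr_deriv
        (mul_one _)
    exact (h1.const_mul c).exp.congr_deriv (by ring)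

/-! ### The limiting derivative profile `S` -/

/-- `S w = E[sgn(w + z)] = 2Φ(w) - 1`, with `Φ` the standard Gaussian distribution function. -/
noncomputable def S (w : ℝ) : ℝ := ∫ z, sgn (w + z) ∂γ

lemma continuous_pdf : Continuous (gaussianPDFReal 0 1) := by
  rw [gaussianPDFReal_def]
  fun_prop

lemma pdf_neg (w : ℝ) : gaussianPDFReal 0 1 (-w) = gaussianPDFReal 0 1 w := by
  simp [gaussianPDFReal_def]

lemma S_eq (w : ℝ) : S w = ∫ u in (-w)..w, gaussianPDFReal 0 1 u := by
  have hint := integrable_gaussianPDFReal 0 1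
  unfold S
  rw [integral_gaussianReal_eq_integral_smul one_ne_zero]
  have hI : Integrable (fun z => gaussianPDFReal 0 1 z • sgn (w + z)) := by
    refine hint.mono ?_ (ae_of_all _ fun z => ?_)
    · have := measurable_sgn
      have := continuous_pdf.measurable
      simp only [smul_eq_mul]
      fun_prop
    · rw [norm_smul]
      exact mul_le_of_le_one_right (norm_nonneg _) (abs_sgn_le _)
  rw [← intervalIntegral.integral_Iic_sub_Iic hint.integrableOn hint.integrableOn,
    ← integral_add_compl (measurableSet_Iic (a := -w)) hI, compl_Iic]
  have e1 : ∫ z in Iic (-w), gaussianPDFReal 0 1 z • sgn (w + z)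
      = - ∫ z in Iic (-w), gaussianPDFReal 0 1 z := by
    rw [← integral_neg, integral_Iic_eq_integral_Iio, integral_Iic_eq_integral_Iio]
    refine setIntegral_congr_fun measurableSet_Iio fun z hz => ?_
    have h : w + z < 0 := by have := mem_Iio.1 hz; linarith
    simp [sgn, sign_neg h]
  have e2 : ∫ z in Ioi (-w), gaussianPDFReal 0 1 z • sgn (w + z)
      = ∫ z in Iic w, gaussianPDFReal 0 1 z := by
    rw [← integral_comp_neg_Iic]
    refine integral_congr_ae ?_
    rw [Filter.EventuallyEq, ← Measure.restrict_congr_set Iio_ae_eq_Iic]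
    refine (ae_restrict_iff' measurableSet_Iio).2 (ae_of_all _ fun z hz => ?_)
    have h : 0 < w + -z := by have := mem_Iio.1 hz; linarith
    rw [pdf_neg]
    simp [sgn, sign_pos h]
  rw [e1, e2]
  ring

/-- `Φ(w)` is uniform on `(0,1)` when `w` is standard Gaussian, so `(2Φ - 1)²` has mean `1/3`;
concretely `S² φ = (S³ / 6)'` and `S` runs from `-1` to `1`. -/
lemma integral_S_sq : ∫ w, S w ^ 2 ∂γ = 1 / 3 := by
  have hint := integrable_gaussianPDFReal 0 1
  have hI : ∀ a b, IntervalIntegrable (gaussianPDFReal 0 1) volume a b :=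
    fun a b => continuous_pdf.intervalIntegrable a b
  have hS0 : S = fun w => (∫ u in (0 : ℝ)..w, gaussianPDFReal 0 1 u)
      - ∫ u in (0 : ℝ)..(-w), gaussianPDFReal 0 1 u := by
    ext w
    rw [S_eq, intervalIntegral.integral_interval_sub_left (hI _ _) (hI _ _)]
  have hd : ∀ w, HasDerivAt S (2 * gaussianPDFReal 0 1 w) w := by
    intro w
    have h := fun v => intervalIntegral.integral_hasDerivAt_right (hI 0 v)
      (continuous_pdf.stronglyMeasurableAtFilter _ _) continuous_pdf.continuousAt
    have h2 := (h (-w)).comp w (hasDerivAt_neg w)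
    rw [hS0]
    refine ((h w).sub h2).congr_deriv ?_
    rw [pdf_neg]; ring
  have htop : Tendsto S atTop (𝓝 1) := by
    have := intervalIntegral_tendsto_integral hint tendsto_neg_atTop_atBot tendsto_id
    rw [integral_gaussianPDFReal_eq_one 0 one_ne_zero] at this
    exact this.congr fun w => (S_eq w).symm
  have hbot : Tendsto S atBot (𝓝 (-1)) := by
    have h := (htop.comp tendsto_neg_atBot_atTop).neg
    refine h.congr fun w => ?_
    simp only [Function.comp, S_eq]
    rw [neg_neg, ← intervalIntegral.integral_symm]
  have habs : ∀ w, |S w| ≤ 1 := by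
    intro w
    refine abs_integral_le_integral_abs.trans ?_
    have : ∫ z, |sgn (w + z)| ∂γ ≤ ∫ _z, (1 : ℝ) ∂γ :=
      integral_mono_of_nonneg (ae_of_all _ fun z => abs_nonneg _) (integrable_const _)
        (ae_of_all _ fun z => abs_sgn_le _)
    simpa using this
  have hcont : Continuous S := continuous_iff_continuousAt.2 fun w => (hd w).continuousAt
  rw [integral_gaussianReal_eq_integral_smul one_ne_zero]
  have := integral_of_hasDerivAt_of_tendsto (f := fun w => S w ^ 3 / 6)
    (f' := fun w => gaussianPDFReal 0 1 w • S w ^ 2) (m := (-1) ^ 3 / 6) (n := 1 ^ 3 / 6)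
    (fun w => by
      refine (((hd w).pow 3).div_const 6).congr_deriv ?_
      simp only [smul_eq_mul]
      push_cast
      ring)
    (by
      refine hint.mono (by
        have := continuous_pdf
        exact (this.smul (hcont.pow 2)).aestronglyMeasurable) (ae_of_all _ fun w => ?_)
      rw [norm_smul]
      refine mul_le_of_le_one_right (norm_nonneg _) ?_
      rw [Real.norm_eq_abs, abs_pow]
      exact pow_le_one₀ (abs_nonneg _) (habs w))
    ((hbot.pow 3).div_const 6) ((htop.pow 3).div_const 6)
  rw [this]
  norm_num

/-! ### Concentration of `Gam` at scale `√(b - t)` -/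

/-- Substituting `x + z τ = s w` turns a Gaussian average against the density of `N(0, s²)` into
an average over the rescaled variable `w`. No integrability is needed. -/
lemma integral_rescale {s τ : ℝ} (hs : 0 < s) (hτ : 0 < τ) (x : ℝ) (h : ℝ → ℝ) :
    ∫ z, h (x + z * τ) * ((√(2 * Real.pi * s ^ 2))⁻¹
      * Real.exp (-(x + z * τ) ^ 2 / (2 * s ^ 2))) ∂γ
    = τ⁻¹ * ∫ w, h (s * w) * gaussianPDFReal 0 1 ((s * w - x) / τ) ∂γ := by
  rw [integral_gaussianReal_eq_integral_smul one_ne_zero,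
    integral_gaussianReal_eq_integral_smul one_ne_zero]
  set g : ℝ → ℝ := fun z => gaussianPDFReal 0 1 z • (h (x + z * τ) *
    ((√(2 * Real.pi * s ^ 2))⁻¹ * Real.exp (-(x + z * τ) ^ 2 / (2 * s ^ 2)))) with hg
  have e1 : ∀ w, gaussianPDFReal 0 1 w • (h (s * w) * gaussianPDFReal 0 1 ((s * w - x) / τ))
      = s * g ((s * w - x) / τ) := by
    intro w
    have hx : x + (s * w - x) / τ * τ = s * w := by field_simp; ring
    have hsq : √(2 * Real.pi * s ^ 2) = √(2 * Real.pi) * s := by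
      rw [Real.sqrt_mul (by positivity), Real.sqrt_sq hs.le]
    have hw : -(s * w) ^ 2 / (2 * s ^ 2) = -w ^ 2 / 2 := by field_simp
    have hφ : gaussianPDFReal 0 1 w = (√(2 * Real.pi))⁻¹ * Real.exp (-w ^ 2 / 2) := by
      simp [gaussianPDFReal_def]
    simp only [hg, hx, smul_eq_mul]
    rw [hsq, hw, hφ]
    field_simp
  simp_rw [e1]
  rw [integral_const_mul, Measure.integral_comp_mul_left (fun u => g ((u - x) / τ)) s,
    integral_sub_right_eq_self (fun u => g (u / τ)) x, Measure.integral_comp_div g τ,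
    abs_of_pos hτ, abs_of_pos (inv_pos.2 hs), smul_eq_mul, smul_eq_mul]
  field_simp

lemma A_eq (b m' t y : ℝ) : A b m' t y = (1 / m') * Real.log (G m' y (√(b - t))) := rfl

lemma continuous_A {m' : ℝ} (hm' : 0 < m') (b t : ℝ) : Continuous (A b m' t) := by
  have h : Continuous fun y => G m' y (√(b - t)) :=
    (continuous_G hm').comp (continuous_id.prodMk continuous_const)
  exact continuous_const.mul (h.log fun y => (one_pos.trans_le (one_le_G hm' _ _)).ne')

lemma exp_mul_A_le_G {m m' : ℝ} (hm : 0 < m) (hmm' : m < m') (b t y : ℝ) :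
    Real.exp (m * A b m' t y) ≤ G m' y (√(b - t)) := by
  have hm' := hm.trans hmm'
  have h1 := one_le_G hm' y (√(b - t))
  have hl := Real.log_nonneg h1
  rw [← Real.le_log_iff_exp_le (one_pos.trans_le h1), A_eq, ← mul_assoc, mul_one_div]
  exact mul_le_of_le_one_left hl ((div_le_one hm').2 hmm'.le)

lemma exp_mul_A_le {m m' : ℝ} (hm : 0 < m) (hmm' : m < m') (b t y : ℝ)
    (h2 : G m' 0 (√(b - t)) ≤ 2) :
    Real.exp (m * A b m' t y) ≤ 2 * Real.exp (m * |y|) := by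
  have hm' := hm.trans hmm'
  have h1 := one_le_G hm' y (√(b - t))
  have hlog : Real.log (G m' y (√(b - t))) ≤ m' * |y| + Real.log 2 := by
    rw [← Real.log_exp (m' * |y|), ← Real.log_mul (Real.exp_pos _).ne' two_ne_zero]
    exact Real.log_le_log (one_pos.trans_le h1)
      ((G_le hm' y _).trans (by gcongr))
  have hl2 : 0 < Real.log 2 := Real.log_pos one_lt_two
  have hr : m / m' ≤ 1 := (div_le_one hm').2 hmm'.le
  calc Real.exp (m * A b m' t y) ≤ Real.exp (m * |y| + Real.log 2) := by
        apply Real.exp_le_exp.2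
        rw [A_eq, ← mul_assoc, mul_one_div]
        calc m / m' * Real.log (G m' y (√(b - t))) ≤ m / m' * (m' * |y| + Real.log 2) := by gcongr
          _ = m * |y| + m / m' * Real.log 2 := by field_simp
          _ ≤ _ := by nlinarith
    _ = _ := by rw [Real.exp_add, Real.exp_log two_pos, mul_comm]

lemma tendsto_sigma (b : ℝ) : Tendsto (fun t => √(b - t)) (𝓝[<] b) (𝓝 0) := by
  have : ContinuousAt (fun t => √(b - t)) b := by fun_prop
  simpa using this.tendsto.mono_left nhdsWithin_le_nhds

lemma tendsto_tau (a b : ℝ) : Tendsto (fun t => √(t - a)) (𝓝[<] b) (𝓝 (√(b - a))) := by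
  have : ContinuousAt (fun t => √(t - a)) b := by fun_prop
  exact this.tendsto.mono_left nhdsWithin_le_nhds

lemma tendsto_G {m' : ℝ} (hm' : 0 < m') (b : ℝ) {y : ℝ → ℝ} {y₀ : ℝ}
    (hy : Tendsto y (𝓝[<] b) (𝓝 y₀)) :
    Tendsto (fun t => G m' (y t) (√(b - t))) (𝓝[<] b) (𝓝 (Real.exp (m' * |y₀|))) := by
  rw [← G_at_zero]
  exact ((continuous_G hm').tendsto (y₀, 0)).comp (hy.prodMk_nhds (tendsto_sigma b))

lemma tendsto_A {m' : ℝ} (hm' : 0 < m') (b : ℝ) {y : ℝ → ℝ} {y₀ : ℝ}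
    (hy : Tendsto y (𝓝[<] b) (𝓝 y₀)) :
    Tendsto (fun t => A b m' t (y t)) (𝓝[<] b) (𝓝 |y₀|) := by
  have h := ((tendsto_G hm' b hy).log (Real.exp_pos _).ne').const_mul (1 / m')
  rw [Real.log_exp, one_div_mul_eq_div, mul_div_cancel_left₀ _ hm'.ne'] at h
  exact h

/-- The normalising constant of `V` converges to that of `Del`. -/
lemma tendsto_norm_const {a b m m' : ℝ} (hm : 0 < m) (hmm' : m < m') (x : ℝ) :
    Tendsto (fun t => ∫ z, Real.exp (m * A b m' t (x + z * √(t - a))) ∂γ)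
      (𝓝[<] b) (𝓝 (G m x (√(b - a)))) := by
  have hm' := hm.trans hmm'
  refine tendsto_integral_filter_of_dominated_convergence
    (fun z => 2 * Real.exp (m * |x| + (m * √(b - a)) * |z|)) ?_ ?_
    ((integrable_exp_abs _ _).const_mul _) ?_
  · refine Eventually.of_forall fun t => ?_
    have := continuous_A hm' b t
    exact Continuous.aestronglyMeasurable (by fun_prop)
  · have h2 : ∀ᶠ t in 𝓝[<] b, G m' 0 (√(b - t)) < 2 :=
      (tendsto_G hm' b (tendsto_const_nhds (x := (0 : ℝ)))).eventually_lt_const (by simp)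
    filter_upwards [h2, self_mem_nhdsWithin] with t h2 htb
    refine ae_of_all _ fun z => ?_
    rw [Real.norm_eq_abs, Real.abs_exp]
    refine (exp_mul_A_le hm hmm' b t _ h2.le).trans ?_
    gcongr
    refine Real.exp_le_exp.1 (exp_abs_le hm le_rfl ?_ z)
    rw [abs_of_nonneg (Real.sqrt_nonneg _)]
    exact Real.sqrt_le_sqrt (by have := mem_Iio.1 htb; linarith)
  · refine ae_of_all _ fun z => ?_
    have hy : Tendsto (fun t => x + z * √(t - a)) (𝓝[<] b) (𝓝 (x + z * √(b - a))) :=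
      ((tendsto_tau a b).const_mul z).const_add x
    exact (Real.continuous_exp.tendsto _).comp ((tendsto_A hm' b hy).const_mul m)

lemma pdf_le_one (w : ℝ) : gaussianPDFReal 0 1 w ≤ 1 := by
  rw [gaussianPDFReal_def]
  have h1 : 1 ≤ √(2 * Real.pi * ((1 : NNReal) : ℝ)) := by
    rw [Real.one_le_sqrt, NNReal.coe_one]
    linarith [Real.pi_gt_three]
  refine mul_le_one₀ (inv_le_one_of_one_le₀ h1) (Real.exp_pos _).le ?_
  rw [Real.exp_le_one_iff, NNReal.coe_one]
  have : 0 ≤ (w - 0) ^ 2 := sq_nonneg _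
  linarith

/-- `Gam` concentrates at scale `√(b - t)` around `0`. If a bounded weight `q` converges to `Q`
when rescaled at that scale, the weighted average of `Gam * V` tends to `E[Q] Δ(x) / 2`. -/
lemma tendsto_weighted {a b m m' : ℝ} (hab : a < b) (hm : 0 < m) (hmm' : m < m') (x : ℝ)
    (q : ℝ → ℝ → ℝ) (Q : ℝ → ℝ) (hq : ∀ t, Measurable (q t))
    (hq1 : ∀ t < b, ∀ y, |q t y| ≤ 1)
    (hqQ : ∀ w, Tendsto (fun t => q t (√(b - t) * w)) (𝓝[<] b) (𝓝 (Q w))) :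
    Tendsto (fun t => ∫ z, q t (x + z * √(t - a)) * Gam b m' t (x + z * √(t - a))
        * V a b m m' t x (x + z * √(t - a)) ∂γ)
      (𝓝[<] b) (𝓝 ((∫ w, Q w ∂γ) * (Del a b m x / 2))) := by
  have hm' := hm.trans hmm'
  set N : ℝ → ℝ := fun t => ∫ z, Real.exp (m * A b m' t (x + z * √(t - a))) ∂γ with hN
  have hNlim : Tendsto N (𝓝[<] b) (𝓝 (G m x (√(b - a)))) := tendsto_norm_const hm hmm' x
  have hGpos : ∀ y s, 0 < G m' y s := fun y s => one_pos.trans_le (one_le_G hm' y s)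
  have hG0 : 0 < G m x (√(b - a)) := one_pos.trans_le (one_le_G hm _ _)
  have hNpos : ∀ᶠ t in 𝓝[<] b, 0 < N t := hNlim.eventually_const_lt hG0
  have hta : ∀ᶠ t in 𝓝[<] b, a < t :=
    nhdsWithin_le_nhds (Ioi_mem_nhds hab)
  have hτ0 : 0 < √(b - a) := Real.sqrt_pos.2 (sub_pos.2 hab)
  -- `Gam * V` is the density of `N(0, b - t)` times `K / N`, with `0 ≤ K ≤ 1` and `K → 1`.
  set K : ℝ → ℝ → ℝ := fun t y => Real.exp (m * A b m' t y) / G m' y (√(b - t)) with hK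
  have hint : Tendsto (fun t => ∫ w, q t (√(b - t) * w) * K t (√(b - t) * w)
      * gaussianPDFReal 0 1 ((√(b - t) * w - x) / √(t - a)) ∂γ) (𝓝[<] b)
      (𝓝 (∫ w, Q w * 1 * gaussianPDFReal 0 1 ((0 - x) / √(b - a)) ∂γ)) := by
    refine tendsto_integral_filter_of_dominated_convergence (fun _ => 1) ?_ ?_
      (integrable_const _) ?_
    · refine Eventually.of_forall fun t => Measurable.aestronglyMeasurable ?_
      have h1 := hq t
      have h2 : Measurable (K t) :=
        ((continuous_A hm' b t).measurable.const_mul m).exp.div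
          ((continuous_G hm').comp (continuous_id.prodMk continuous_const)).measurable
      have h3 := continuous_pdf.measurable
      fun_prop
    · filter_upwards [self_mem_nhdsWithin] with t htb
      refine ae_of_all _ fun w => ?_
      have hK0 : 0 ≤ K t (√(b - t) * w) := div_nonneg (Real.exp_pos _).le (hGpos _ _).le
      have hK1 : K t (√(b - t) * w) ≤ 1 :=
        (div_le_one (hGpos _ _)).2 (exp_mul_A_le_G hm hmm' b t _)
      rw [norm_mul, norm_mul, Real.norm_eq_abs, Real.norm_of_nonneg hK0,
        Real.norm_of_nonneg (gaussianPDFReal_nonneg _ _ _)]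
      exact mul_le_one₀ (mul_le_one₀ (hq1 t htb _) hK0 hK1) (gaussianPDFReal_nonneg _ _ _)
        (pdf_le_one _)
    · refine ae_of_all _ fun w => ?_
      have hy : Tendsto (fun t => √(b - t) * w) (𝓝[<] b) (𝓝 0) := by
        simpa using (tendsto_sigma b).mul_const w
      have hKl : Tendsto (fun t => K t (√(b - t) * w)) (𝓝[<] b) (𝓝 1) := by
        have h1 := (Real.continuous_exp.tendsto _).comp ((tendsto_A hm' b hy).const_mul m)
        have h2 := tendsto_G hm' b hy
        have h3 := h1.div h2 (Real.exp_pos _).ne'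
        rw [abs_zero, mul_zero, mul_zero, Real.exp_zero, div_one] at h3
        exact h3
      exact ((hqQ w).mul hKl).mul ((continuous_pdf.tendsto _).comp
        ((hy.sub_const x).div (tendsto_tau a b) hτ0.ne'))
  have hall := ((hNlim.inv₀ hG0.ne').mul ((tendsto_tau a b).inv₀ hτ0.ne')).mul hint
  have hval : (G m x (√(b - a)))⁻¹ * (√(b - a))⁻¹
      * ∫ w, Q w * 1 * gaussianPDFReal 0 1 ((0 - x) / √(b - a)) ∂γ
      = (∫ w, Q w ∂γ) * (Del a b m x / 2) := by
    have hD : Del a b m x = 2 / √(2 * Real.pi * (b - a)) * Real.exp (-x ^ 2 / (2 * (b - a)))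
        / G m x (√(b - a)) := rfl
    have hsq : √(2 * Real.pi * (b - a)) = √(2 * Real.pi) * √(b - a) :=
      Real.sqrt_mul (by positivity) _
    have hφ : gaussianPDFReal 0 1 ((0 - x) / √(b - a))
        = (√(2 * Real.pi))⁻¹ * Real.exp (-x ^ 2 / (2 * (b - a))) := by
      have : -((0 - x) / √(b - a)) ^ 2 / 2 = -x ^ 2 / (2 * (b - a)) := by
        rw [div_pow, Real.sq_sqrt (sub_pos.2 hab).le]
        have := (sub_pos.2 hab).ne'
        field_simp
        ring
      rw [← this]
      simp [gaussianPDFReal_def]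
    simp_rw [mul_one]
    rw [integral_mul_const, hD, hsq, hφ]
    field_simp
  rw [hval] at hall
  refine hall.congr' ?_
  filter_upwards [hNpos, hta, self_mem_nhdsWithin] with t hNt hat htb
  have hs : 0 < √(b - t) := Real.sqrt_pos.2 (sub_pos.2 htb)
  have hτ : 0 < √(t - a) := Real.sqrt_pos.2 (sub_pos.2 hat)
  have hre := integral_rescale hs hτ x (fun y => q t y * K t y)
  rw [mul_assoc, ← hre, ← integral_const_mul]
  refine integral_congr_ae (ae_of_all _ fun z => ?_)
  rw [Real.sq_sqrt (sub_pos.2 htb).le]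
  beta_reduce
  set y := x + z * √(t - a)
  have hV : V a b m m' t x y = Real.exp (m * A b m' t y) / N t := by
    have hB : m * B a b m m' t x = Real.log (N t) := by
      change m * (1 / m * Real.log (N t)) = _
      field_simp
    rw [V, mul_sub, hB, Real.exp_sub, Real.exp_log hNt]
  have hGam : Gam b m' t y = (√(2 * Real.pi * (b - t)))⁻¹
      * Real.exp (-y ^ 2 / (2 * (b - t))) / G m' y (√(b - t)) := rfl
  simp only [hV, hGam, hK]
  ring

/-! ### The derivative of `A` -/

lemma deriv_A {b m' t : ℝ} (hm' : 0 < m') (htb : t < b) (y : ℝ) :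
    deriv (A b m' t) y = DG m' y (√(b - t)) / G m' y (√(b - t)) := by
  have hs : 0 < √(b - t) := Real.sqrt_pos.2 (sub_pos.2 htb)
  have hG : 0 < G m' y (√(b - t)) := one_pos.trans_le (one_le_G hm' _ _)
  have h := ((hasDerivAt_G hm' hs y).log hG.ne').const_mul (1 / m')
  refine (HasDerivAt.deriv (f := A b m' t) h).trans ?_
  field_simp

lemma abs_deriv_A_le {b m' t : ℝ} (hm' : 0 < m') (htb : t < b) (y : ℝ) :
    |deriv (A b m' t) y| ≤ 1 := by
  have hG : 0 < G m' y (√(b - t)) := one_pos.trans_le (one_le_G hm' _ _)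
  rw [deriv_A hm' htb, abs_div, abs_of_pos hG, div_le_one hG]
  exact abs_DG_le hm' _ _

/-- At scale `√(b - t)`, the derivative of `A` converges to the profile `S`. -/
lemma tendsto_deriv_A {m' : ℝ} (hm' : 0 < m') (b w : ℝ) :
    Tendsto (fun t => deriv (A b m' t) (√(b - t) * w)) (𝓝[<] b) (𝓝 (S w)) := by
  have hy : Tendsto (fun t => √(b - t) * w) (𝓝[<] b) (𝓝 0) := by
    simpa using (tendsto_sigma b).mul_const w
  have hDG : Tendsto (fun t => DG m' (√(b - t) * w) (√(b - t))) (𝓝[<] b) (𝓝 (S w)) := by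
    refine tendsto_integral_filter_of_dominated_convergence
      (fun z => Real.exp (m' * 1 + (m' * 1) * |z|)) ?_ ?_ (integrable_exp_abs _ _) ?_
    · refine Eventually.of_forall fun t => Measurable.aestronglyMeasurable ?_
      have := measurable_sgn
      fun_prop
    · have h1 : ∀ᶠ t in 𝓝[<] b, |√(b - t) * w| < 1 := hy.abs.eventually_lt_const (by simp)
      have h2 : ∀ᶠ t in 𝓝[<] b, |√(b - t)| < 1 :=
        (tendsto_sigma b).abs.eventually_lt_const (by simp)
      filter_upwards [h1, h2] with t h1 h2
      refine ae_of_all _ fun z => ?_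
      rw [norm_mul, Real.norm_eq_abs, Real.norm_eq_abs, Real.abs_exp]
      exact (mul_le_of_le_one_left (Real.exp_pos _).le (abs_sgn_le _)).trans
        (exp_abs_le hm' h1.le h2.le z)
    · refine ae_of_all _ fun z => ?_
      have he : Tendsto (fun t => Real.exp (m' * |√(b - t) * w + z * √(b - t)|)) (𝓝[<] b)
          (𝓝 1) := by
        have h1 := (hy.add ((tendsto_sigma b).const_mul z)).abs.const_mul m'
        have h2 := (Real.continuous_exp.tendsto _).comp h1
        rw [mul_zero, add_zero, abs_zero, mul_zero, Real.exp_zero] at h2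
        exact h2
      have h2 := he.const_mul (sgn (w + z))
      rw [mul_one] at h2
      refine h2.congr' ?_
      filter_upwards [self_mem_nhdsWithin] with t htb
      have hs : 0 < √(b - t) := Real.sqrt_pos.2 (sub_pos.2 htb)
      rw [← sgn_mul_pos hs (w + z), mul_add, mul_comm z]
  have hG := tendsto_G hm' b hy
  have h := hDG.div hG (Real.exp_pos _).ne'
  simp only [abs_zero, mul_zero, Real.exp_zero, div_one] at h
  refine h.congr' ?_
  filter_upwards [self_mem_nhdsWithin] with t htb
  exact (deriv_A hm' htb _).symm

/-- `E[Γ V] → Δ(x)/2` and `E[(∂ₓA)² Γ V] → Δ(x)/6` as `t → b⁻`. -/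
theorem Gamma_V_limits (a b m m' : ℝ) (ha : 0 ≤ a) (hab : a < b)
    (hm : 0 < m) (hmm' : m < m') :
    ∀ x : ℝ,
      Filter.Tendsto
        (fun t => ∫ z, Gam b m' t (x + z * Real.sqrt (t - a))
            * V a b m m' t x (x + z * Real.sqrt (t - a)) ∂(gaussianReal 0 1))
        (nhdsWithin b (Set.Iio b)) (nhds (Del a b m x / 2))
      ∧ Filter.Tendsto
        (fun t => ∫ z, (deriv (A b m' t) (x + z * Real.sqrt (t - a))) ^ 2
            * Gam b m' t (x + z * Real.sqrt (t - a))
            * V a b m m' t x (x + z * Real.sqrt (t - a)) ∂(gaussianReal 0 1))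
        (nhdsWithin b (Set.Iio b)) (nhds (Del a b m x / 6)) := by
  intro x
  have hm' := hm.trans hmm'
  constructor
  · have h := tendsto_weighted hab hm hmm' x (fun _ _ => 1) (fun _ => 1)
      (fun _ => measurable_const) (fun _ _ _ => by simp) (fun _ => tendsto_const_nhds)
    simpa using h
  · have h := tendsto_weighted hab hm hmm' x (fun t y => deriv (A b m' t) y ^ 2)
      (fun w => S w ^ 2) (fun t => (measurable_deriv _).pow_const 2)
      (fun t htb y => by
        rw [abs_pow]
        exact pow_le_one₀ (abs_nonneg _) (abs_deriv_A_le hm' htb y))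
      (fun w => (tendsto_deriv_A hm' b w).pow 2)
    rw [integral_S_sq, show 1 / 3 * (Del a b m x / 2) = Del a b m x / 6 by ring] at h
    exact h
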